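/- arXiv:2602.11788 — 2 statements merged into one kernel-verified Lean document; each statement's English description precedes it below -/
import Mathlib

section
/- Let q be a prime power, n a positive integer coprime to q, γ ∈ ZMod n, τ = |c_{n/q}(γ)|, and d a positive divisor of n. Then the image of d in ZMod n satisfies d + c_{n/q}(γ) = c_{n/q}(γ) if and only if n/d divides τ and ω_γ divides d·τ/n. Moreover, in that case, setting t = d·τ/n, the unique partition of c_{n/q}(γ) into equal-difference sets with common difference d is c_{n/q}(γ) = ⋃_{i=0}^{t−1} c_{n/q^t}(γ·q^i), a disjoint union of q^t-cyclotomic cosets. -/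
/-! Inside the cyclic group `ZMod n`, the element `a • γ` lies in `γ + ⟨δ⟩` iff
`e * a ≡ e` modulo `N`, where `e` and `N` are the orders of `δ` and `γ`. Hence the coset
`c_{n/Q}(γ)` equals `γ + ⟨δ⟩` iff the residues `≡ 1` modulo `N / e` are exactly the powers of `Q`
modulo `N`. Lifting the exponent turns this into two conditions: `Q` has order `e` modulo `N`, and
`Q ≡ 1` modulo `rad N`, respectively modulo `lcm 4 (rad N)` if `8 ∣ N` (the group of residues
`≡ 1` modulo `2` is not cyclic modulo `8`). Translation by `δ` preserves `c_{n/q}(γ)` iff this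
happens for some `Q = q ^ t` with `t ∣ τ`; comparing orders forces `t = τ / e`, and `ω_γ` is the
order of `q` modulo the modulus above. -/

section LiftingTheExponent

theorem prime_pow_dvd_mul_sub_of_odd {p : ℕ} (hp : p.Prime) (hodd : Odd p) {x y : ℤ}
    (hxy : (p : ℤ) ∣ x - y) (hx : ¬ (p : ℤ) ∣ x) {j k : ℕ} (h : (p : ℤ) ^ j ∣ x ^ k - y ^ k) :
    (p : ℤ) ^ j ∣ k * (x - y) := by
  rw [pow_dvd_iff_le_emultiplicity] at h ⊢
  rwa [emultiplicity_mul (Nat.prime_iff_prime_int.mp hp), Int.natCast_emultiplicity, add_comm,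
    ← Int.emultiplicity_pow_sub_pow hp hodd hxy hx k]

theorem odd_pow_odd_modEq_four {x : ℤ} (hx : Odd x) {k : ℕ} (hk : Odd k) :
    x ^ k ≡ x [ZMOD 4] := by
  obtain ⟨l, rfl⟩ := hk
  have hsq : x ^ 2 ≡ 1 [ZMOD 4] := Int.sq_mod_four_eq_one_of_odd hx
  rw [pow_succ, pow_mul]
  simpa only [one_pow, one_mul] using (hsq.pow l).mul_right x

theorem two_pow_dvd_mul_sub {x y : ℤ} (hxy : 2 ∣ x - y) (hx : ¬ 2 ∣ x) {j k : ℕ}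
    (h4 : 3 ≤ j → 4 ∣ x - y) (h : (2 : ℤ) ^ j ∣ x ^ k - y ^ k) :
    (2 : ℤ) ^ j ∣ k * (x - y) := by
  by_cases hxy4 : 4 ∣ x - y
  · rw [pow_dvd_iff_le_emultiplicity] at h ⊢
    rw [emultiplicity_mul Int.prime_two, add_comm]
    exact_mod_cast (Int.two_pow_sub_pow' k hxy4 hx) ▸ h
  have hj : (2 : ℤ) ^ j ∣ 4 := pow_dvd_pow 2 (show j ≤ 2 by by_contra! hj; exact hxy4 (h4 hj))
  obtain hk | hk := Nat.even_or_odd k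
  · exact hj.trans (mul_dvd_mul (Int.natCast_dvd_natCast.mpr hk.two_dvd) hxy)
  · have hxodd : Odd x := Int.not_even_iff_odd.mp fun hx' => hx hx'.two_dvd
    have hyodd : Odd y := by grind
    have hmod : x ^ k - y ^ k ≡ x - y [ZMOD 4] :=
      (odd_pow_odd_modEq_four hxodd hk).sub (odd_pow_odd_modEq_four hyodd hk)
    exact (((dvd_sub_left h).mp (hj.trans hmod.dvd))).mul_left _

/-- The modulus `M` such that `Q ≡ 1 [MOD M]` makes lifting the exponent work modulo `N`: the
radical of `N`, joined with `4` if `8 ∣ N`. -/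
def liftingModulus (N : ℕ) : ℕ :=
  if 8 ∣ N then Nat.lcm 4 (∏ p ∈ N.primeFactors, p) else ∏ p ∈ N.primeFactors, p

theorem prod_primeFactors_dvd_iff_forall_prime {N m : ℕ} (hN : N ≠ 0) :
    ∏ p ∈ N.primeFactors, p ∣ m ↔ ∀ p : ℕ, p.Prime → p ∣ N → p ∣ m :=
  ⟨fun h _ hp hpN => (Finset.dvd_prod_of_mem _ (hp.mem_primeFactors hpN hN)).trans h,
    fun h => Finset.prod_primes_dvd _ (fun _ hp => (Nat.prime_of_mem_primeFactors hp).prime)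
      fun p hp => h p (Nat.prime_of_mem_primeFactors hp) (Nat.dvd_of_mem_primeFactors hp)⟩

theorem liftingModulus_dvd_iff {N m : ℕ} (hN : N ≠ 0) :
    liftingModulus N ∣ m ↔ (∀ p : ℕ, p.Prime → p ∣ N → p ∣ m) ∧ (8 ∣ N → 4 ∣ m) := by
  rw [← prod_primeFactors_dvd_iff_forall_prime hN, liftingModulus]
  split_ifs with h8 <;> simp [h8, Nat.lcm_dvd_iff, and_comm]

theorem mul_modEq_of_pow_modEq_one {N Q k : ℕ} (hN : N ≠ 0) (hQ : Q ≡ 1 [MOD liftingModulus N])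
    (hk : Q ^ k ≡ 1 [MOD N]) : k * Q ≡ k [MOD N] := by
  obtain ⟨hrad, h4⟩ := (liftingModulus_dvd_iff hN).mp dvd_rfl
  have hsub {m : ℕ} (h : Q ≡ 1 [MOD m]) : (m : ℤ) ∣ (Q : ℤ) - 1 := by
    simpa using Nat.modEq_iff_dvd.mp h.symm
  suffices h : (N : ℤ) ∣ k * ((Q : ℤ) - 1) by
    exact (Nat.modEq_iff_dvd.mpr (by simpa [mul_sub] using h)).symm
  rw [Int.natCast_dvd, Nat.dvd_iff_prime_pow_dvd_dvd]
  intro p j hp hpj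
  rw [← Int.natCast_dvd, Nat.cast_pow]
  obtain rfl | hj := eq_or_ne j 0
  · simp
  have hpQ : (p : ℤ) ∣ (Q : ℤ) - 1 :=
    hsub (hQ.of_dvd (hrad p hp ((dvd_pow_self p hj).trans hpj)))
  have hndvd : ¬ (p : ℤ) ∣ Q := fun h =>
    (Nat.prime_iff_prime_int.mp hp).not_dvd_one (by simpa using dvd_sub h hpQ)
  have hpk : (p : ℤ) ^ j ∣ (Q : ℤ) ^ k - 1 ^ k := by
    simpa using Nat.modEq_iff_dvd.mp (hk.of_dvd hpj).symm
  obtain rfl | hodd := hp.eq_two_or_odd'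
  · exact two_pow_dvd_mul_sub hpQ hndvd
      (fun hj3 => hsub (hQ.of_dvd (h4 ((pow_dvd_pow 2 hj3).trans hpj)))) hpk
  · exact prime_pow_dvd_mul_sub_of_odd hp hodd hpQ hndvd hpk

theorem odd_sq_modEq_one {Q : ℕ} (hQ : Odd Q) : Q ^ 2 ≡ 1 [MOD 8] :=
  ((Nat.modEq_iff_dvd' (Nat.one_le_pow _ _ hQ.pos)).mpr (Nat.eight_dvd_sq_sub_one_of_odd hQ)).symm

theorem odd_of_coprime_of_even {N Q : ℕ} (h : N.Coprime Q) (hN : Even N) : Odd Q :=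
  Nat.Coprime.odd_of_left (h.coprime_dvd_left hN.two_dvd)

theorem pow_modEq_one_or_self_of_odd {Q : ℕ} (hQ : Odd Q) (k : ℕ) :
    Q ^ k ≡ 1 [MOD 8] ∨ Q ^ k ≡ Q [MOD 8] := by
  obtain ⟨l, rfl | rfl⟩ := Nat.even_or_odd' k
  · left; simpa [pow_mul] using (odd_sq_modEq_one hQ).pow l
  · right; simpa [pow_succ, pow_mul] using ((odd_sq_modEq_one hQ).pow l).mul_right Q

theorem liftingModulus_dvd_of_forall_exists_modEq_pow {N Q f : ℕ} (hN : N ≠ 0) (hQ : N.Coprime Q)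
    (h : ∀ a : ℕ, a ≡ 1 [MOD f] → ∃ k : ℕ, a ≡ Q ^ k [MOD N]) : liftingModulus N ∣ f := by
  refine (liftingModulus_dvd_iff hN).mpr ⟨fun p hp hpN => ?_, fun h8 => ?_⟩
  · by_contra hpf
    obtain ⟨a, ha0, ha1⟩ := Nat.chineseRemainder (hp.coprime_iff_not_dvd.mpr hpf) 0 1
    obtain ⟨k, hk⟩ := h a ha1
    have hpQ : p ∣ Q ^ k := Nat.modEq_zero_iff_dvd.mp ((hk.of_dvd hpN).symm.trans ha0)
    exact Nat.not_coprime_of_dvd_of_dvd hp.one_lt hpN (hp.dvd_of_dvd_pow hpQ) hQ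
  · have hodd : Odd Q := odd_of_coprime_of_even hQ ((by decide : Even 8).trans_dvd h8)
    obtain ⟨k, hk⟩ := h (1 + f) (by simp [Nat.ModEq])
    obtain ⟨l, hl⟩ := h (1 + f * 2) (by simp [Nat.ModEq])
    have hk8 := (pow_modEq_one_or_self_of_odd hodd k).imp (hk.of_dvd h8).trans (hk.of_dvd h8).trans
    have hl8 := (pow_modEq_one_or_self_of_odd hodd l).imp (hl.of_dvd h8).trans (hl.of_dvd h8).trans
    simp only [Nat.ModEq] at hk8 hl8
    omega

end LiftingTheExponent

section MultiplicativeOrder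

theorem natCast_pow_modEq_one_iff {m q i : ℕ} :
    q ^ i ≡ 1 [MOD m] ↔ orderOf (q : ZMod m) ∣ i := by
  rw [← ZMod.natCast_eq_natCast_iff, orderOf_dvd_iff_pow_eq_one, Nat.cast_pow, Nat.cast_one]

theorem isOfFinOrder_natCast {m q : ℕ} (hm : m ≠ 0) (h : m.Coprime q) :
    IsOfFinOrder (q : ZMod m) :=
  isOfFinOrder_iff_pow_eq_one.mpr ⟨m.totient, Nat.totient_pos.mpr (Nat.pos_of_ne_zero hm), by
    simpa using (ZMod.natCast_eq_natCast_iff _ _ _).mpr (Nat.ModEq.pow_totient h.symm)⟩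

theorem ne_zero_of_dvd_orderOf_natCast {m q t : ℕ} (hm : m ≠ 0) (h : m.Coprime q)
    (ht : t ∣ orderOf (q : ZMod m)) : t ≠ 0 :=
  ne_zero_of_dvd_ne_zero (isOfFinOrder_natCast hm h).orderOf_pos.ne' ht

theorem orderOf_natCast_dvd_of_dvd {m N : ℕ} (h : m ∣ N) (q : ℕ) :
    orderOf (q : ZMod m) ∣ orderOf (q : ZMod N) :=
  natCast_pow_modEq_one_iff.mp ((natCast_pow_modEq_one_iff.mpr dvd_rfl).of_dvd h)

theorem orderOf_natCast_lcm (a b q : ℕ) :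
    orderOf (q : ZMod (a.lcm b)) = (orderOf (q : ZMod a)).lcm (orderOf (q : ZMod b)) := by
  refine Nat.dvd_antisymm ?_ (Nat.lcm_dvd (orderOf_natCast_dvd_of_dvd (Nat.dvd_lcm_left a b) q)
    (orderOf_natCast_dvd_of_dvd (Nat.dvd_lcm_right a b) q))
  set t := (orderOf (q : ZMod a)).lcm (orderOf (q : ZMod b))
  have ha : 1 ≡ q ^ t [MOD a] := (natCast_pow_modEq_one_iff.mpr (Nat.dvd_lcm_left _ _)).symm
  have hb : 1 ≡ q ^ t [MOD b] := (natCast_pow_modEq_one_iff.mpr (Nat.dvd_lcm_right _ _)).symm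
  refine natCast_pow_modEq_one_iff.mp (Nat.modEq_iff_dvd.mpr ?_).symm
  exact Int.natCast_dvd.mpr (Nat.lcm_dvd (Int.natCast_dvd.mp (Nat.modEq_iff_dvd.mp ha))
    (Int.natCast_dvd.mp (Nat.modEq_iff_dvd.mp hb)))

theorem orderOf_natCast_four_dvd_two {q : ℕ} (hq : Odd q) : orderOf (q : ZMod 4) ∣ 2 :=
  natCast_pow_modEq_one_iff.mp ((odd_sq_modEq_one hq).of_dvd (by norm_num : 4 ∣ 8))

/-- The invariant `ω_γ` of an element `γ` of additive order `N`. -/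
noncomputable def cyclotomicOmega (q N : ℕ) : ℕ :=
  if q ^ orderOf (q : ZMod (∏ p ∈ N.primeFactors, p)) % 4 = 3 ∧ 8 ∣ N
    then 2 * orderOf (q : ZMod (∏ p ∈ N.primeFactors, p))
    else orderOf (q : ZMod (∏ p ∈ N.primeFactors, p))

theorem cyclotomicOmega_eq_orderOf {q N : ℕ} (hco : N.Coprime q) :
    cyclotomicOmega q N = orderOf (q : ZMod (liftingModulus N)) := by
  rw [cyclotomicOmega]
  by_cases h8 : 8 ∣ N
  swap
  · rw [if_neg (fun h => h8 h.2), liftingModulus, if_neg h8]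
  rw [liftingModulus, if_pos h8, orderOf_natCast_lcm]
  set m := orderOf (q : ZMod (∏ p ∈ N.primeFactors, p))
  have hodd : Odd q := odd_of_coprime_of_even hco ((by decide : Even 8).trans_dvd h8)
  have hdvd_iff : orderOf (q : ZMod 4) ∣ m ↔ q ^ m % 4 = 1 := natCast_pow_modEq_one_iff.symm
  simp only [h8, and_true]
  split_ifs with h3
  · have hndvd : ¬ orderOf (q : ZMod 4) ∣ m := by omega
    have h2 : orderOf (q : ZMod 4) = 2 :=
      ((Nat.dvd_prime Nat.prime_two).mp (orderOf_natCast_four_dvd_two hodd)).resolve_left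
        fun h1 => hndvd (h1 ▸ one_dvd m)
    rw [h2] at hndvd ⊢
    exact ((Nat.prime_two.coprime_iff_not_dvd.mpr hndvd).lcm_eq_mul).symm
  · have hqm : q ^ m % 2 = 1 := Nat.odd_iff.mp hodd.pow
    exact (Nat.lcm_eq_right (hdvd_iff.mpr (by omega))).symm

end MultiplicativeOrder

theorem mem_zmultiples_iff_addOrderOf_nsmul_eq_zero {G : Type*} [AddCommGroup G] [Finite G]
    [IsAddCyclic G] {x y : G} : x ∈ AddSubgroup.zmultiples y ↔ addOrderOf y • x = 0 := by
  have hle : AddSubgroup.zmultiples y ≤ (nsmulAddMonoidHom (addOrderOf y) : G →+ G).ker := by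
    simp [AddSubgroup.zmultiples_le, AddMonoidHom.mem_ker]
  have hcard : Nat.card (nsmulAddMonoidHom (addOrderOf y) : G →+ G).ker ≤
      Nat.card (AddSubgroup.zmultiples y) := by
    rw [IsAddCyclic.card_nsmulAddMonoidHom_ker, Nat.card_zmultiples,
      Nat.gcd_eq_right (addOrderOf_dvd_natCard y)]
  rw [AddSubgroup.eq_of_le_of_card_ge hle hcard, AddMonoidHom.mem_ker, nsmulAddMonoidHom_apply]

section CyclotomicCoset

/-- The `q`-cyclotomic coset of `γ`, stated for an arbitrary monoid; the case `M = ZMod n` is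
`c_{n/q}(γ)`. -/
def cyclotomicCoset {M : Type*} [Monoid M] (q γ : M) : Set M :=
  {x | ∃ i : ℕ, x = γ * q ^ i}

theorem mem_cyclotomicCoset_self {M : Type*} [Monoid M] (q γ : M) : γ ∈ cyclotomicCoset q γ :=
  ⟨0, by simp⟩

theorem cyclotomicCoset_pow_subset {M : Type*} [Monoid M] (q γ : M) (t i : ℕ) :
    cyclotomicCoset (q ^ t) (γ * q ^ i) ⊆ cyclotomicCoset q γ := by
  rintro _ ⟨k, rfl⟩
  exact ⟨i + t * k, by rw [pow_add, pow_mul, mul_assoc]⟩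

theorem cyclotomicCoset_eq_iUnion_pow {M : Type*} [Monoid M] (q γ : M) {t : ℕ} (ht : t ≠ 0) :
    cyclotomicCoset q γ = ⋃ i ∈ Finset.range t, cyclotomicCoset (q ^ t) (γ * q ^ i) := by
  refine Set.Subset.antisymm ?_ (Set.iUnion₂_subset fun i _ => cyclotomicCoset_pow_subset q γ t i)
  rintro _ ⟨i, rfl⟩
  exact Set.mem_biUnion (Finset.mem_range.mpr (Nat.mod_lt i (Nat.pos_of_ne_zero ht)))
    ⟨i / t, by rw [mul_assoc, ← pow_mul, ← pow_add, Nat.mod_add_div]⟩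

variable {n q : ℕ} {γ δ : ZMod n}

theorem mul_natCast_eq_mul_natCast_iff {a b : ℕ} :
    γ * a = γ * b ↔ a ≡ b [MOD addOrderOf γ] := by
  rw [← nsmul_eq_nsmul_iff_modEq, nsmul_eq_mul, nsmul_eq_mul, mul_comm γ, mul_comm γ]

theorem addOrderOf_mul_pow (hco : (addOrderOf γ).Coprime q) (i : ℕ) :
    addOrderOf (γ * (q : ZMod n) ^ i) = addOrderOf γ := by
  rw [mul_comm, ← Nat.cast_pow, ← nsmul_eq_mul]
  exact (hco.pow_right i).addOrderOf_nsmul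

theorem addOrderOf_dvd_of_add_mem_cyclotomicCoset
    (h : δ + γ ∈ cyclotomicCoset (q : ZMod n) γ) : addOrderOf δ ∣ addOrderOf γ := by
  obtain ⟨i, hi⟩ := h
  have hγ : (addOrderOf γ : ZMod n) * γ = 0 := by rw [← nsmul_eq_mul, addOrderOf_nsmul_eq_zero]
  rw [addOrderOf_dvd_iff_nsmul_eq_zero, eq_sub_of_add_eq hi, nsmul_eq_mul]
  linear_combination ((q : ZMod n) ^ i - 1) * hγ

variable [NeZero n]

theorem mul_pow_eq_mul_pow_iff (hco : (addOrderOf γ).Coprime q) {i j : ℕ} :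
    γ * (q : ZMod n) ^ i = γ * (q : ZMod n) ^ j ↔
      i ≡ j [MOD orderOf (q : ZMod (addOrderOf γ))] := by
  rw [← (isOfFinOrder_natCast (addOrderOf_pos γ).ne' hco).pow_eq_pow_iff_modEq,
    ← Nat.cast_pow, ← Nat.cast_pow, mul_natCast_eq_mul_natCast_iff,
    ← ZMod.natCast_eq_natCast_iff, Nat.cast_pow, Nat.cast_pow]

theorem ncard_cyclotomicCoset (hco : (addOrderOf γ).Coprime q) :
    (cyclotomicCoset (q : ZMod n) γ).ncard = orderOf (q : ZMod (addOrderOf γ)) := by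
  set τ := orderOf (q : ZMod (addOrderOf γ))
  have hpos : 0 < τ := (isOfFinOrder_natCast (addOrderOf_pos γ).ne' hco).orderOf_pos
  have himage : cyclotomicCoset (q : ZMod n) γ =
      (fun i : ℕ => γ * (q : ZMod n) ^ i) '' (Finset.range τ : Set ℕ) := by
    refine Set.Subset.antisymm ?_ (Set.image_subset_iff.mpr fun i _ => ⟨i, rfl⟩)
    rintro _ ⟨i, rfl⟩
    exact ⟨i % τ, Finset.mem_coe.mpr (Finset.mem_range.mpr (Nat.mod_lt i hpos)),
      (mul_pow_eq_mul_pow_iff hco).mpr (Nat.mod_modEq i τ)⟩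
  have hinj : Set.InjOn (fun i : ℕ => γ * (q : ZMod n) ^ i) (Finset.range τ : Set ℕ) :=
    fun i hi j hj hij => ((mul_pow_eq_mul_pow_iff hco).mp hij).eq_of_lt_of_lt
      (Finset.mem_range.mp hi) (Finset.mem_range.mp hj)
  rw [himage, hinj.ncard_image, Set.ncard_coe_finset, Finset.card_range]

theorem pairwiseDisjoint_cyclotomicCoset_pow (hco : (addOrderOf γ).Coprime q) {t : ℕ}
    (ht : t ∣ orderOf (q : ZMod (addOrderOf γ))) :
    (Set.Iio t).PairwiseDisjoint
      fun i => cyclotomicCoset ((q : ZMod n) ^ t) (γ * (q : ZMod n) ^ i) := by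
  refine fun i hi j hj hij => Set.disjoint_left.mpr ?_
  rintro _ ⟨k, rfl⟩ ⟨l, hl⟩
  rw [mul_assoc, mul_assoc, ← pow_mul, ← pow_mul, ← pow_add, ← pow_add,
    mul_pow_eq_mul_pow_iff hco] at hl
  refine hij (Nat.ModEq.eq_of_lt_of_lt (m := t) ?_ hi hj)
  simpa [Nat.ModEq] using hl.of_dvd ht

end CyclotomicCoset

section Translates

theorem ncard_add_image_zmultiples {G : Type*} [AddGroup G] (x y : G) :
    ((x + ·) '' (AddSubgroup.zmultiples y : Set G)).ncard = addOrderOf y := by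
  rw [Set.ncard_image_of_injective _ (add_right_injective x), ← Nat.card_zmultiples]
  rfl

theorem add_image_add_image_zmultiples {G : Type*} [AddCommGroup G] (x y : G) :
    (y + ·) '' ((x + ·) '' (AddSubgroup.zmultiples y : Set G)) =
      (x + ·) '' (AddSubgroup.zmultiples y : Set G) := by
  ext z
  simp only [Set.image_add_left, Set.mem_preimage, SetLike.mem_coe]
  rw [add_left_comm]
  exact AddSubgroup.add_mem_cancel_left _ (neg_mem (AddSubgroup.mem_zmultiples y))

theorem add_image_zmultiples_subset {G : Type*} [AddCommGroup G] [Finite G] {S : Set G} {x y : G}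
    (hx : x ∈ S) (hS : (y + ·) '' S = S) : (x + ·) '' (AddSubgroup.zmultiples y : Set G) ⊆ S := by
  have hmem (k : ℕ) : x + k • y ∈ S := by
    induction k with
    | zero => simpa using hx
    | succ k ih =>
      rw [← hS]
      exact ⟨_, ih, by rw [succ_nsmul']; exact add_left_comm _ _ _⟩
  rintro _ ⟨_, hk, rfl⟩
  obtain ⟨k, rfl⟩ := mem_multiples_iff_mem_zmultiples.mpr hk
  exact hmem k

variable {n q Q : ℕ} [NeZero n] {γ δ : ZMod n}

theorem mul_natCast_mem_add_image_zmultiples_iff {a : ℕ} :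
    γ * a ∈ (γ + ·) '' (AddSubgroup.zmultiples δ : Set (ZMod n)) ↔
      addOrderOf δ * a ≡ addOrderOf δ [MOD addOrderOf γ] := by
  rw [Set.image_add_left, Set.mem_preimage, SetLike.mem_coe,
    mem_zmultiples_iff_addOrderOf_nsmul_eq_zero, ← mul_natCast_eq_mul_natCast_iff,
    nsmul_eq_mul, ← sub_eq_zero (b := γ * (addOrderOf δ : ZMod n)), Nat.cast_mul]
  ring_nf

theorem mul_natCast_mem_add_image_zmultiples_iff_of_dvd (h : addOrderOf δ ∣ addOrderOf γ) {a : ℕ} :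
    γ * a ∈ (γ + ·) '' (AddSubgroup.zmultiples δ : Set (ZMod n)) ↔
      a ≡ 1 [MOD addOrderOf γ / addOrderOf δ] := by
  obtain ⟨f, hf⟩ := h
  have hδ := addOrderOf_pos δ
  rw [mul_natCast_mem_add_image_zmultiples_iff, hf, Nat.mul_div_cancel_left f hδ]
  simpa only [mul_one] using Nat.ModEq.mul_left_cancel_iff' (b := 1) hδ.ne'

theorem cyclotomicCoset_eq_add_image_zmultiples (hco : (addOrderOf γ).Coprime Q)
    (hord : orderOf (Q : ZMod (addOrderOf γ)) = addOrderOf δ)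
    (hQ : Q ≡ 1 [MOD liftingModulus (addOrderOf γ)]) :
    cyclotomicCoset (Q : ZMod n) γ = (γ + ·) '' (AddSubgroup.zmultiples δ : Set (ZMod n)) := by
  have hmul : addOrderOf δ * Q ≡ addOrderOf δ [MOD addOrderOf γ] :=
    mul_modEq_of_pow_modEq_one (addOrderOf_pos γ).ne' hQ (natCast_pow_modEq_one_iff.mpr hord.dvd)
  have hpow (k : ℕ) : addOrderOf δ * Q ^ k ≡ addOrderOf δ [MOD addOrderOf γ] := by
    induction k with
    | zero => simpa using Nat.ModEq.refl _
    | succ k ih => simpa only [pow_succ, mul_assoc] using (ih.mul_right Q).trans hmul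
  refine Set.eq_of_subset_of_ncard_le ?_ ?_
  · rintro _ ⟨k, rfl⟩
    simpa using mul_natCast_mem_add_image_zmultiples_iff.mpr (hpow k)
  · rw [ncard_add_image_zmultiples, ncard_cyclotomicCoset hco, hord]

theorem orderOf_and_modEq_one_of_cyclotomicCoset_eq (hco : (addOrderOf γ).Coprime Q)
    (h : cyclotomicCoset (Q : ZMod n) γ =
      (γ + ·) '' (AddSubgroup.zmultiples δ : Set (ZMod n))) :
    orderOf (Q : ZMod (addOrderOf γ)) = addOrderOf δ ∧
      Q ≡ 1 [MOD liftingModulus (addOrderOf γ)] := by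
  have hmem : δ + γ ∈ cyclotomicCoset (Q : ZMod n) γ := by
    rw [h]
    exact ⟨δ, AddSubgroup.mem_zmultiples δ, add_comm γ δ⟩
  have hdvd := addOrderOf_dvd_of_add_mem_cyclotomicCoset hmem
  have hlift : liftingModulus (addOrderOf γ) ∣ addOrderOf γ / addOrderOf δ := by
    refine liftingModulus_dvd_of_forall_exists_modEq_pow (addOrderOf_pos γ).ne' hco fun a ha => ?_
    obtain ⟨k, hk⟩ : γ * a ∈ cyclotomicCoset (Q : ZMod n) γ :=
      h ▸ (mul_natCast_mem_add_image_zmultiples_iff_of_dvd hdvd).mpr ha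
    exact ⟨k, mul_natCast_eq_mul_natCast_iff.mp (by simpa using hk)⟩
  have hQ : γ * (Q : ZMod n) ∈ (γ + ·) '' (AddSubgroup.zmultiples δ : Set (ZMod n)) :=
    h ▸ ⟨1, by rw [pow_one]⟩
  refine ⟨?_, ((mul_natCast_mem_add_image_zmultiples_iff_of_dvd hdvd).mp hQ).of_dvd hlift⟩
  rw [← ncard_cyclotomicCoset hco, h, ncard_add_image_zmultiples]

theorem cyclotomicCoset_eq_add_image_zmultiples_iff (hco : (addOrderOf γ).Coprime Q) :
    cyclotomicCoset (Q : ZMod n) γ = (γ + ·) '' (AddSubgroup.zmultiples δ : Set (ZMod n)) ↔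
      orderOf (Q : ZMod (addOrderOf γ)) = addOrderOf δ ∧
        Q ≡ 1 [MOD liftingModulus (addOrderOf γ)] :=
  ⟨orderOf_and_modEq_one_of_cyclotomicCoset_eq hco,
    fun h => cyclotomicCoset_eq_add_image_zmultiples hco h.1 h.2⟩

theorem cyclotomicCoset_pow_eq_add_image_zmultiples_iff (hco : (addOrderOf γ).Coprime q) {t : ℕ}
    (ht : t ∣ orderOf (q : ZMod (addOrderOf γ))) :
    cyclotomicCoset ((q : ZMod n) ^ t) γ =
        (γ + ·) '' (AddSubgroup.zmultiples δ : Set (ZMod n)) ↔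
      orderOf (q : ZMod (addOrderOf γ)) = addOrderOf δ * t ∧
        cyclotomicOmega q (addOrderOf γ) ∣ t := by
  have ht0 : t ≠ 0 := ne_zero_of_dvd_orderOf_natCast (addOrderOf_pos γ).ne' hco ht
  rw [← Nat.cast_pow, cyclotomicCoset_eq_add_image_zmultiples_iff (hco.pow_right t),
    natCast_pow_modEq_one_iff, ← cyclotomicOmega_eq_orderOf hco, Nat.cast_pow,
    orderOf_pow_of_dvd ht0 ht, Nat.div_eq_iff_eq_mul_left (Nat.pos_of_ne_zero ht0) ht]

theorem exists_pow_of_add_image_cyclotomicCoset_eq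
    (hS : (δ + ·) '' cyclotomicCoset (q : ZMod n) γ = cyclotomicCoset (q : ZMod n) γ) :
    ∃ t, t ∣ orderOf (q : ZMod (addOrderOf γ)) ∧ cyclotomicCoset ((q : ZMod n) ^ t) γ =
      (γ + ·) '' (AddSubgroup.zmultiples δ : Set (ZMod n)) := by
  have hmem := mem_cyclotomicCoset_self (q : ZMod n) γ
  have hdvd : addOrderOf δ ∣ addOrderOf γ :=
    addOrderOf_dvd_of_add_mem_cyclotomicCoset (hS ▸ Set.mem_image_of_mem _ hmem)
  have hpow_mem_iff {i : ℕ} :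
      γ * (q : ZMod n) ^ i ∈ (γ + ·) '' (AddSubgroup.zmultiples δ : Set (ZMod n)) ↔
        orderOf (q : ZMod (addOrderOf γ / addOrderOf δ)) ∣ i := by
    rw [← Nat.cast_pow, mul_natCast_mem_add_image_zmultiples_iff_of_dvd hdvd,
      natCast_pow_modEq_one_iff]
  refine ⟨_, orderOf_natCast_dvd_of_dvd (Nat.div_dvd_of_dvd hdvd) q, Set.Subset.antisymm ?_ ?_⟩
  · rintro _ ⟨k, rfl⟩
    rw [← pow_mul]
    exact hpow_mem_iff.mpr (dvd_mul_right _ k)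
  · intro x hx
    obtain ⟨i, rfl⟩ := add_image_zmultiples_subset hmem hS hx
    obtain ⟨k, rfl⟩ := hpow_mem_iff.mp hx
    exact ⟨k, by rw [pow_mul]⟩

theorem cyclotomicCoset_pow_mul_pow_eq (hco : (addOrderOf γ).Coprime q) {t : ℕ}
    (hτ : orderOf (q : ZMod (addOrderOf γ)) = addOrderOf δ * t)
    (hω : cyclotomicOmega q (addOrderOf γ) ∣ t) (i : ℕ) :
    cyclotomicCoset ((q : ZMod n) ^ t) (γ * (q : ZMod n) ^ i) =
      (γ * (q : ZMod n) ^ i + ·) '' (AddSubgroup.zmultiples δ : Set (ZMod n)) := by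
  have hγi := addOrderOf_mul_pow hco i
  rw [cyclotomicCoset_pow_eq_add_image_zmultiples_iff] <;> rw [hγi]
  exacts [⟨hτ, hω⟩, hco, hτ ▸ dvd_mul_left t _]

theorem add_image_cyclotomicCoset_eq_iff (hco : (addOrderOf γ).Coprime q) :
    (δ + ·) '' cyclotomicCoset (q : ZMod n) γ = cyclotomicCoset (q : ZMod n) γ ↔
      ∃ t, orderOf (q : ZMod (addOrderOf γ)) = addOrderOf δ * t ∧
        cyclotomicOmega q (addOrderOf γ) ∣ t := by
  constructor
  · intro hS
    obtain ⟨t, ht, h⟩ := exists_pow_of_add_image_cyclotomicCoset_eq hS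
    exact ⟨t, (cyclotomicCoset_pow_eq_add_image_zmultiples_iff hco ht).mp h⟩
  · rintro ⟨t, hτ, hω⟩
    have ht : t ≠ 0 :=
      ne_zero_of_dvd_orderOf_natCast (addOrderOf_pos γ).ne' hco (hτ ▸ dvd_mul_left t _)
    rw [cyclotomicCoset_eq_iUnion_pow _ _ ht, Set.image_iUnion₂]
    simp only [cyclotomicCoset_pow_mul_pow_eq hco hτ hω, add_image_add_image_zmultiples]

end Translates

theorem addOrderOf_natCast_eq_div {n d : ℕ} (hn : n ≠ 0) (hdn : d ∣ n) :
    addOrderOf (d : ZMod n) = n / d := by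
  rw [ZMod.addOrderOf_coe d hn, Nat.gcd_eq_right hdn]

theorem mul_div_eq_of_eq_div_mul {n d τ t : ℕ} (hn : 0 < n) (hdn : d ∣ n) (hτ : τ = n / d * t) :
    d * τ / n = t := by
  rw [hτ, ← mul_assoc, Nat.mul_div_cancel' hdn, Nat.mul_div_cancel_left t hn]

theorem med_of_cyclotomic_coset_iff_general {n q d τ : ℕ} (hn : 0 < n) (hdn : d ∣ n) {γ : ZMod n}
    (hco : (addOrderOf γ).Coprime q) (hτ : τ = Nat.card (cyclotomicCoset (q : ZMod n) γ)) :
    (((d : ZMod n) + ·) '' cyclotomicCoset (q : ZMod n) γ = cyclotomicCoset (q : ZMod n) γ ↔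
      n / d ∣ τ ∧ cyclotomicOmega q (addOrderOf γ) ∣ d * τ / n) ∧
    (((d : ZMod n) + ·) '' cyclotomicCoset (q : ZMod n) γ = cyclotomicCoset (q : ZMod n) γ →
      (∀ i < d * τ / n, ∃ γ₀ : ZMod n,
        cyclotomicCoset ((q : ZMod n) ^ (d * τ / n)) (γ * (q : ZMod n) ^ i) =
          (γ₀ + ·) '' (AddSubgroup.closure {(d : ZMod n)} : Set (ZMod n))) ∧
      (Set.Iio (d * τ / n)).PairwiseDisjoint
        (fun i => cyclotomicCoset ((q : ZMod n) ^ (d * τ / n)) (γ * (q : ZMod n) ^ i)) ∧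
      cyclotomicCoset (q : ZMod n) γ = ⋃ i ∈ Finset.range (d * τ / n),
        cyclotomicCoset ((q : ZMod n) ^ (d * τ / n)) (γ * (q : ZMod n) ^ i)) := by
  have : NeZero n := ⟨hn.ne'⟩
  have hord : addOrderOf (d : ZMod n) = n / d := addOrderOf_natCast_eq_div hn.ne' hdn
  have hτord : orderOf (q : ZMod (addOrderOf γ)) = τ := by
    rw [hτ, Nat.card_coe_set_eq, ncard_cyclotomicCoset hco]
  have hiff := add_image_cyclotomicCoset_eq_iff (δ := (d : ZMod n)) hco
  refine ⟨hiff.trans ?_, fun hC => ?_⟩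
  · rw [hord, hτord]
    constructor
    · rintro ⟨t, ht, hω⟩
      exact ⟨⟨t, ht⟩, by rwa [mul_div_eq_of_eq_div_mul hn hdn ht]⟩
    · rintro ⟨⟨t, ht⟩, hω⟩
      exact ⟨t, ht, by rwa [mul_div_eq_of_eq_div_mul hn hdn ht] at hω⟩
  · obtain ⟨t, ht, hω⟩ := hiff.mp hC
    rw [mul_div_eq_of_eq_div_mul hn hdn (hord ▸ hτord ▸ ht), ← AddSubgroup.zmultiples_eq_closure]
    have htdvd : t ∣ orderOf (q : ZMod (addOrderOf γ)) := ht ▸ dvd_mul_left t _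
    have ht0 : t ≠ 0 := ne_zero_of_dvd_orderOf_natCast (addOrderOf_pos γ).ne' hco htdvd
    exact ⟨fun i _ => ⟨_, cyclotomicCoset_pow_mul_pow_eq hco ht hω i⟩,
      pairwiseDisjoint_cyclotomicCoset_pow hco htdvd,
      cyclotomicCoset_eq_iUnion_pow _ _ ht0⟩

/-- For a positive divisor `d` of `n`, the image of `d` in `ZMod n` stabilizes
the cyclotomic coset `c_{n/q}(γ)` iff `n/d ∣ τ` and `ω_γ ∣ d·τ/n`; and in that case, with
`t = d·τ/n`, the unique partition of `c_{n/q}(γ)` into equal-difference sets with common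
difference `d` is the disjoint union of the `q^t`-cyclotomic cosets `c_{n/q^t}(γ·q^i)`,
`0 ≤ i < t`. -/
theorem med_of_cyclotomic_coset_iff (q n : ℕ) (hq : IsPrimePow q) (hn : 0 < n)
    (hco : Nat.Coprime n q) (γ : ZMod n)
    (C : Set (ZMod n)) (hC : C = {x : ZMod n | ∃ i : ℕ, x = γ * (q : ZMod n) ^ i})
    (τ : ℕ) (hτ : τ = Nat.card C)
    (nγ : ℕ) (hnγ : nγ = addOrderOf γ)
    (r : ℕ) (hr : r = ∏ p ∈ nγ.primeFactors, p)
    (ω : ℕ) (hω : ω = if q ^ orderOf (q : ZMod r) % 4 = 3 ∧ 8 ∣ nγ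
      then 2 * orderOf (q : ZMod r) else orderOf (q : ZMod r))
    (d : ℕ) (hd : 0 < d) (hdn : d ∣ n) :
    ((((d : ZMod n)) + ·) '' C = C ↔ (n / d ∣ τ ∧ ω ∣ d * τ / n)) ∧
    ((((d : ZMod n)) + ·) '' C = C →
      (∀ i < d * τ / n, ∃ γ₀ : ZMod n,
        {x : ZMod n | ∃ k : ℕ, x = γ * (q : ZMod n) ^ i * ((q : ZMod n) ^ (d * τ / n)) ^ k} =
          (γ₀ + ·) '' ((AddSubgroup.closure {((d : ZMod n))} :
            AddSubgroup (ZMod n)) : Set (ZMod n))) ∧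
      (∀ i < d * τ / n, ∀ j < d * τ / n, i ≠ j →
        Disjoint
          {x : ZMod n | ∃ k : ℕ, x = γ * (q : ZMod n) ^ i * ((q : ZMod n) ^ (d * τ / n)) ^ k}
          {x : ZMod n | ∃ k : ℕ, x = γ * (q : ZMod n) ^ j * ((q : ZMod n) ^ (d * τ / n)) ^ k}) ∧
      C = ⋃ i ∈ Finset.range (d * τ / n),
        {x : ZMod n | ∃ k : ℕ, x = γ * (q : ZMod n) ^ i * ((q : ZMod n) ^ (d * τ / n)) ^ k}) := by
  subst hC hτ hnγ hr hω
  exact med_of_cyclotomic_coset_iff_general hn hdn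
    (hco.coprime_dvd_left (addOrderOf_dvd_iff_nsmul_eq_zero.mpr (by simp))) rfl
end

section
/- Let K be a field containing a primitive n-th root of unity ζ, let d be a positive divisor of n, let H be the additive subgroup of ZMod n generated by the image of d, and suppose the finite subset T ⊆ ZMod n is the disjoint union of the cosets γ_i + H for i in a finite index set I (with γ_i + H pairwise disjoint). Then the polynomial f_T factors into binomials of equal degree: ∏_{γ ∈ T} (X − ζ^{γ̃}) = ∏_{i ∈ I} (X^{n/d} − ζ^{γ̃_i·(n/d)}) in K[X]. -/
open Polynomial

/-!
The map `χ : x ↦ ζ ^ x.val` is an additive character of `ZMod n` that is injective on `H`. For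
`x` in a coset `g + H` and `m = |H|` we have `χ x ^ m = χ g ^ m`, so the `m` distinct values of `χ`
on the coset are all the roots of `X ^ m - χ g ^ m`: each coset contributes one binomial.
-/

theorem prod_X_sub_C_eq_X_pow_card_sub_C {R ι : Type*} [CommRing R] [IsDomain R] {s : Finset ι}
    (hs : s.Nonempty) {v : ι → R} (hv : Set.InjOn v s) {a : R}
    (hroot : ∀ i ∈ s, v i ^ s.card = a) :
    ∏ i ∈ s, (X - C (v i)) = X ^ s.card - C a := by
  have hcard : 0 < s.card := hs.card_pos
  rw [← Lagrange.nodal_eq]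
  refine eq_of_degree_le_of_eval_index_eq s hv ?_ ?_ ?_ fun i hi ↦ ?_
  · exact Lagrange.degree_nodal.le
  · rw [Lagrange.degree_nodal, degree_X_pow_sub_C hcard]
  · rw [Lagrange.nodal_monic, leadingCoeff_X_pow_sub_C hcard]
  · simp only [Lagrange.eval_nodal_at_node hi, eval_sub, eval_pow, eval_X, eval_C, hroot i hi,
      sub_self]

theorem addChar_injOn_zmultiples {G M : Type*} [AddGroup G] [CommMonoid M] (χ : AddChar G M)
    {g : G} (hχ : IsPrimitiveRoot (χ g) (addOrderOf g)) :
    Set.InjOn χ (AddSubgroup.zmultiples g) := by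
  let φ : Multiplicative G →* Mˣ := χ.toMonoidHom.toHomUnits
  have hφ : IsPrimitiveRoot (φ (.ofAdd g)) (addOrderOf g) := IsPrimitiveRoot.coe_units_iff.mp hχ
  rintro _ ⟨k, rfl⟩ _ ⟨l, rfl⟩ hkl
  have hpow : φ (.ofAdd g) ^ k = φ (.ofAdd g) ^ l := by
    rw [← map_zpow φ, ← map_zpow φ]
    exact Units.ext hkl
  rwa [zpow_eq_zpow_iff_modEq, ← hφ.eq_orderOf, ← zsmul_eq_zsmul_iff_modEq] at hpow

section Cosets

variable {G R : Type*} [AddGroup G] [CommRing R] [IsDomain R] (χ : AddChar G R)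
  {H : AddSubgroup G} [Finite H]

theorem finprod_mem_coset_X_sub_C_addChar (hχ : Set.InjOn χ H) (g : G) :
    ∏ᶠ x ∈ (g + ·) '' (H : Set G), (X - C (χ x)) = X ^ Nat.card H - C (χ g ^ Nat.card H) := by
  have := Fintype.ofFinite H
  have hinj : Function.Injective fun h : H ↦ χ (g + h) := fun h k hhk ↦ by
    have hunit : IsUnit (χ g) := χ.val_isUnit g
    simp only [χ.map_add_eq_mul] at hhk
    exact Subtype.ext (hχ h.2 k.2 (hunit.mul_left_cancel hhk))
  have hroot (h : H) : χ (g + h) ^ Fintype.card H = χ g ^ Fintype.card H := by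
    rw [χ.map_add_eq_mul, mul_pow, ← χ.map_nsmul_eq_pow (Fintype.card H) (h : G),
      ← AddSubgroup.coe_nsmul, card_nsmul_eq_zero, AddSubgroup.coe_zero, χ.map_zero_eq_one, mul_one]
  rw [finprod_mem_image (add_right_injective g).injOn, ← finprod_set_coe_eq_finprod_mem,
    Nat.card_eq_fintype_card]
  exact (finprod_eq_prod_of_fintype _).trans <|
    prod_X_sub_C_eq_X_pow_card_sub_C Finset.univ_nonempty hinj.injOn fun h _ ↦ hroot h

theorem prod_X_sub_C_addChar_of_eq_biUnion_cosets (hχ : Set.InjOn χ H)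
    {ι : Type*} {I : Finset ι} {γ : ι → G} {T : Finset G}
    (hT : (T : Set G) = ⋃ i ∈ I, (γ i + ·) '' (H : Set G))
    (hdisj : (I : Set ι).PairwiseDisjoint fun i ↦ (γ i + ·) '' (H : Set G)) :
    ∏ x ∈ T, (X - C (χ x)) = ∏ i ∈ I, (X ^ Nat.card H - C (χ (γ i) ^ Nat.card H)) := by
  calc ∏ x ∈ T, (X - C (χ x))
      = ∏ᶠ x ∈ ⋃ i ∈ (I : Set ι), (γ i + ·) '' (H : Set G), (X - C (χ x)) := by
        rw [← finprod_mem_coe_finset, hT]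
        simp only [Finset.mem_coe]
    _ = ∏ᶠ i ∈ (I : Set ι), ∏ᶠ x ∈ (γ i + ·) '' (H : Set G), (X - C (χ x)) :=
        finprod_mem_biUnion hdisj I.finite_toSet fun _ _ ↦ (Set.toFinite (H : Set G)).image _
    _ = ∏ i ∈ I, (X ^ Nat.card H - C (χ (γ i) ^ Nat.card H)) := by
        simp only [finprod_mem_coset_X_sub_C_addChar χ hχ, finprod_mem_coe_finset]

end Cosets

theorem med_gives_binomial_factorization_general {R : Type*} [CommRing R] [IsDomain R]
    {n : ℕ} (hn : 0 < n) {d : ℕ} (hdn : d ∣ n) {ζ : R} (hζ : IsPrimitiveRoot (ζ ^ d) (n / d))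
    {H : AddSubgroup (ZMod n)} (hH : H = AddSubgroup.closure {(d : ZMod n)})
    {ι : Type*} {I : Finset ι} {γ : ι → ZMod n} {T : Finset (ZMod n)}
    (hT : (T : Set (ZMod n)) = ⋃ i ∈ I, (γ i + ·) '' (H : Set (ZMod n)))
    (hdisj : (I : Set ι).PairwiseDisjoint fun i ↦ (γ i + ·) '' (H : Set (ZMod n))) :
    ∏ x ∈ T, (X - C (ζ ^ x.val)) =
      ∏ i ∈ I, (X ^ (n / d) - C (ζ ^ ((γ i).val * (n / d)))) := by
  have : NeZero n := ⟨hn.ne'⟩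
  have hζn : ζ ^ n = 1 := by rw [← Nat.mul_div_cancel' hdn, pow_mul, hζ.pow_eq_one]
  let χ : AddChar (ZMod n) R := AddChar.zmodChar n hζn
  have horder : addOrderOf (d : ZMod n) = n / d := by
    rw [ZMod.addOrderOf_coe d hn.ne', Nat.gcd_eq_right hdn]
  rw [← AddSubgroup.zmultiples_eq_closure] at hH
  have hχd : IsPrimitiveRoot (χ d) (addOrderOf (d : ZMod n)) := by
    rwa [horder, AddChar.zmodChar_apply' hζn]
  have hχ : Set.InjOn χ H := hH ▸ addChar_injOn_zmultiples χ hχd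
  have hcard : Nat.card H = n / d := by rw [hH, Nat.card_zmultiples, horder]
  simpa only [hcard, χ, AddChar.zmodChar_apply, ← pow_mul] using
    prod_X_sub_C_addChar_of_eq_biUnion_cosets χ hχ hT hdisj

/-- If the finite subset `T ⊆ ZMod n` is the disjoint union of the cosets
`γ i + H`, `i ∈ I`, where `H` is the additive subgroup of `ZMod n` generated by the image of
a positive divisor `d` of `n`, then `f_T = ∏_{x ∈ T} (X - ζ^x̃)` factors into binomials of
equal degree: `f_T = ∏_{i ∈ I} (X^(n/d) - ζ^(γ̃_i·(n/d)))`. -/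
theorem med_gives_binomial_factorization {K : Type*} [Field K]
    (n : ℕ) (hn : 0 < n) (ζ : K) (hζ : IsPrimitiveRoot ζ n)
    (d : ℕ) (hd : 0 < d) (hdn : d ∣ n)
    (H : AddSubgroup (ZMod n)) (hH : H = AddSubgroup.closure {((d : ZMod n))})
    {ι : Type*} [DecidableEq ι] (I : Finset ι) (γ : ι → ZMod n)
    (T : Finset (ZMod n))
    (hT : (T : Set (ZMod n)) = ⋃ i ∈ I, (γ i + ·) '' (H : Set (ZMod n)))
    (hdisj : ∀ i ∈ I, ∀ j ∈ I, i ≠ j →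
      Disjoint ((γ i + ·) '' (H : Set (ZMod n))) ((γ j + ·) '' (H : Set (ZMod n)))) :
    ∏ x ∈ T, (X - C (ζ ^ x.val)) =
      ∏ i ∈ I, (X ^ (n / d) - C (ζ ^ ((γ i).val * (n / d)))) := by
  exact med_gives_binomial_factorization_general hn hdn
    (hζ.pow hn (Nat.mul_div_cancel' hdn).symm) hH hT fun i hi j hj ↦ hdisj i hi j hj
end
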